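/- arXiv:2604.06329 — 2 statements merged into one kernel-verified Lean document; each statement's English description precedes it below -/
import Mathlib

section
/- In the classic General Lotto game GL(X,Y;v), the max-min and min-max values coincide and equal the equilibrium value π_GL(X,Y): sup_{F_X ∈ 𝔽(X)} inf_{F_Y ∈ 𝔽(Y)} π_X(F_X,F_Y) = inf_{F_Y ∈ 𝔽(Y)} sup_{F_X ∈ 𝔽(X)} π_X(F_X,F_Y) = π_GL(X,Y), where π_GL(X,Y) := X/(2Y) if X ≤ Y and π_GL(X,Y) := 1 − Y/(2X) if X > Y. -/
open MeasureTheory Finset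

noncomputable section

/-- Admissible strategies for a player with budget `B`: Borel probability measures on `ℝ^C`
supported (i.e. concentrated, with full measure) on the nonnegative orthant, whose expected
total allocation is at most `B`. -/
def Strat (C : ℕ) (B : ℝ) : Set (Measure (Fin C → ℝ)) :=
  {μ | IsProbabilityMeasure μ ∧ μ {x | ∀ c, 0 ≤ x c} = 1 ∧
    ∫⁻ x, ENNReal.ofReal (∑ c, x c) ∂μ ≤ ENNReal.ofReal B}

/-- Expected payoff to player `X`: `E[Σ_c v_c · 1{x_c ≥ y_c}]`. -/
def payoff (C : ℕ) (v : Fin C → ℝ) (F G : Measure (Fin C → ℝ)) : ℝ :=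
  ∫ x, (∫ y, (∑ c, if y c ≤ x c then v c else 0) ∂G) ∂F

/-!
Scale a single uniform variable `u` on `[0, 1]` so that contest `c` receives `2 * m * u * v c`.
Against this ray, an allocation `x` wins contest `c` with probability at most `x c / (2 * m * v c)`,
so its expected payoff is at most `(∑ c, x c) / (2 * m)`: only the budget of the opponent matters.
A player with budget `B ≤ m` can afford to play the ray with probability `B / m` and nothing
otherwise, which holds an opponent of budget `B'` to `1 - B / m * (1 - B' / (2 * m))`. Ties are
won by the first player, so the payoffs of `F` against `G` and of `G` against `F` sum to at least
the total value, and the same strategy guarantees its owner `B / m * (1 - B' / (2 * m))`.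
The guarantees of the two players leave the gap `(1 - X / m) * (1 - Y / m)`, which vanishes for
`m = max X Y`: the two strategies form a saddle point.
-/

open unitInterval

section SaddlePoint

variable {α β γ : Type*} [ConditionallyCompleteLattice γ] {f : α → β → γ} {a₀ : α} {b₀ : β} {V : γ}

lemma ciSup_ciInf_eq_of_saddlePoint (hf : ∀ a, BddBelow (Set.range (f a)))
    (hlower : ∀ b, V ≤ f a₀ b) (hupper : ∀ a, f a b₀ ≤ V) : ⨆ a, ⨅ b, f a b = V := by
  have : Nonempty α := ⟨a₀⟩
  have : Nonempty β := ⟨b₀⟩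
  have hinf (a : α) : ⨅ b, f a b ≤ V := (ciInf_le (hf a) b₀).trans (hupper a)
  exact le_antisymm (ciSup_le hinf)
    ((le_ciInf hlower).trans (le_ciSup ⟨V, Set.forall_mem_range.2 hinf⟩ a₀))

lemma ciInf_ciSup_eq_of_saddlePoint (hf : ∀ b, BddAbove (Set.range fun a => f a b))
    (hlower : ∀ b, V ≤ f a₀ b) (hupper : ∀ a, f a b₀ ≤ V) : ⨅ b, ⨆ a, f a b = V :=
  ciSup_ciInf_eq_of_saddlePoint (γ := γᵒᵈ) (f := fun b a => f a b) hf hupper hlower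

end SaddlePoint

section ContestPayoff

variable {ι : Type*} [Fintype ι] {v : ι → ℝ}

/-- The payoff of the deterministic allocation `x` against `y`: the total value of the contests
in which `x` is at least `y`, so that ties are won by `x`. -/
def contestPayoff (v x y : ι → ℝ) : ℝ :=
  ∑ c, if y c ≤ x c then v c else 0

lemma contestPayoff_nonneg (hv : 0 ≤ v) (x y : ι → ℝ) : 0 ≤ contestPayoff v x y :=
  sum_nonneg fun c _ => ite_nonneg (hv c) le_rfl

lemma contestPayoff_le_sum (hv : 0 ≤ v) (x y : ι → ℝ) : contestPayoff v x y ≤ ∑ c, v c :=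
  sum_le_sum fun c _ => ite_le_sup _ _ _ |>.trans_eq (sup_of_le_left (hv c))

lemma sum_le_contestPayoff_add_contestPayoff (hv : 0 ≤ v) (x y : ι → ℝ) :
    ∑ c, v c ≤ contestPayoff v x y + contestPayoff v y x := by
  rw [contestPayoff, contestPayoff, ← sum_add_distrib]
  refine sum_le_sum fun c _ => ?_
  have hvc : 0 ≤ v c := hv c
  rcases le_total (y c) (x c) with h | h <;> rw [if_pos h] <;> split_ifs <;> linarith

lemma integrable_contestPayoff (v : ι → ℝ) (μ : Measure ((ι → ℝ) × (ι → ℝ))) [IsFiniteMeasure μ] :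
    Integrable (fun q => contestPayoff v q.1 q.2) μ := by
  refine integrable_finsetSum _ fun c _ => ?_
  have hwin : MeasurableSet {q : (ι → ℝ) × (ι → ℝ) | q.2 c ≤ q.1 c} :=
    measurableSet_le (by fun_prop) (by fun_prop)
  exact (integrable_const (v c)).indicator hwin

lemma integral_contestPayoff_right (v x : ι → ℝ) (G : Measure (ι → ℝ)) [IsFiniteMeasure G] :
    ∫ y, contestPayoff v x y ∂G = ∑ c, v c * G.real {y | y c ≤ x c} := by
  have hwin (c : ι) : MeasurableSet {y : ι → ℝ | y c ≤ x c} :=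
    measurableSet_le (by fun_prop) (by fun_prop)
  have hite (c : ι) : (fun y : ι → ℝ => if y c ≤ x c then v c else 0) =
      {y | y c ≤ x c}.indicator fun _ => v c := rfl
  simp only [contestPayoff]
  rw [integral_finsetSum _ fun c _ => hite c ▸ (integrable_const (v c)).indicator (hwin c)]
  refine sum_congr rfl fun c _ => ?_
  rw [hite, integral_indicator_const _ (hwin c), smul_eq_mul, mul_comm]

end ContestPayoff

section Payoff

variable {C : ℕ} {v : Fin C → ℝ}

lemma payoff_eq_integral_prod (v : Fin C → ℝ) (F G : Measure (Fin C → ℝ)) [IsFiniteMeasure F]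
    [IsFiniteMeasure G] : payoff C v F G = ∫ q, contestPayoff v q.1 q.2 ∂F.prod G :=
  (integral_prod _ (integrable_contestPayoff v _)).symm

lemma payoff_nonneg (hv : 0 ≤ v) (F G : Measure (Fin C → ℝ)) : 0 ≤ payoff C v F G :=
  integral_nonneg fun x => integral_nonneg fun y => contestPayoff_nonneg hv x y

variable (F G : Measure (Fin C → ℝ)) [IsProbabilityMeasure F] [IsProbabilityMeasure G]

lemma payoff_le_sum (hv : 0 ≤ v) : payoff C v F G ≤ ∑ c, v c := by
  rw [payoff_eq_integral_prod]
  calc ∫ q, contestPayoff v q.1 q.2 ∂F.prod G ≤ ∫ _, ∑ c, v c ∂F.prod G :=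
        integral_mono (integrable_contestPayoff v _) (integrable_const _)
          fun q => contestPayoff_le_sum hv q.1 q.2
    _ = ∑ c, v c := by simp

lemma sum_le_payoff_add_payoff (hv : 0 ≤ v) : ∑ c, v c ≤ payoff C v F G + payoff C v G F := by
  have hswap : payoff C v G F = ∫ q, contestPayoff v q.2 q.1 ∂F.prod G := by
    rw [payoff_eq_integral_prod, ← integral_prod_swap]
    rfl
  have hint := integrable_contestPayoff v (F.prod G)
  have hint_swap : Integrable (fun q => contestPayoff v q.2 q.1) (F.prod G) :=
    (integrable_contestPayoff v (G.prod F)).swap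
  rw [hswap, payoff_eq_integral_prod, ← integral_add hint hint_swap]
  calc ∑ c, v c = ∫ _, ∑ c, v c ∂F.prod G := by simp
    _ ≤ ∫ q, contestPayoff v q.1 q.2 + contestPayoff v q.2 q.1 ∂F.prod G :=
        integral_mono (integrable_const _) (hint.add hint_swap)
          fun q => sum_le_contestPayoff_add_contestPayoff hv q.1 q.2

end Payoff

namespace Strat

variable {C : ℕ} {B : ℝ} {F : Measure (Fin C → ℝ)}

lemma ae_nonneg (hF : F ∈ Strat C B) : ∀ᵐ x ∂F, 0 ≤ x :=
  have := hF.1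
  (mem_ae_iff_prob_eq_one measurableSet_Ici).2 hF.2.1

lemma ae_sum_nonneg (hF : F ∈ Strat C B) : 0 ≤ᵐ[F] fun x => ∑ c, x c :=
  (ae_nonneg hF).mono fun _ hx => sum_nonneg fun c _ => hx c

lemma integrable_sum (hF : F ∈ Strat C B) : Integrable (fun x => ∑ c, x c) F :=
  ⟨by fun_prop, (hasFiniteIntegral_iff_ofReal (ae_sum_nonneg hF)).2
    (hF.2.2.trans_lt ENNReal.ofReal_lt_top)⟩

lemma integral_sum_le (hB : 0 ≤ B) (hF : F ∈ Strat C B) : ∫ x, ∑ c, x c ∂F ≤ B := by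
  rw [integral_eq_lintegral_of_nonneg_ae (ae_sum_nonneg hF) (by fun_prop)]
  exact ENNReal.toReal_le_of_le_ofReal hB hF.2.2

lemma payoff_le_of_cdf_le {v a : Fin C → ℝ} {b : ℝ} (hb : 0 ≤ b) (hB : 0 ≤ B)
    (hF : F ∈ Strat C B) (G : Measure (Fin C → ℝ)) [IsFiniteMeasure G]
    (hcdf : ∀ c t, 0 ≤ t → v c * G.real {y | y c ≤ t} ≤ a c + b * t) :
    payoff C v F G ≤ ∑ c, a c + b * B := by
  have := hF.1
  have hmean := integrable_sum hF
  have hpointwise : ∀ᵐ x ∂F, ∫ y, contestPayoff v x y ∂G ≤ ∑ c, a c + b * ∑ c, x c := by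
    filter_upwards [ae_nonneg hF] with x hx
    rw [integral_contestPayoff_right, mul_sum, ← sum_add_distrib]
    exact sum_le_sum fun c _ => hcdf c (x c) (hx c)
  calc payoff C v F G ≤ ∫ x, (∑ c, a c + b * ∑ c, x c) ∂F :=
        integral_mono_ae (integrable_contestPayoff v (F.prod G)).integral_prod_left
          ((integrable_const _).add (hmean.const_mul b)) hpointwise
    _ = ∑ c, a c + b * ∫ x, ∑ c, x c ∂F := by
        rw [integral_add (integrable_const _) (hmean.const_mul b), integral_const_mul]
        simp
    _ ≤ ∑ c, a c + b * B := by
        gcongr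
        exact integral_sum_le hB hF

end Strat

section UniformUnitInterval

lemma mul_volume_real_setOf_mul_le_le {a t : ℝ} (ha : 0 ≤ a) (ht : 0 ≤ t) :
    a * (volume : Measure I).real {u | a * u ≤ t} ≤ t := by
  rcases le_or_gt a t with hat | hta
  · exact (mul_le_of_le_one_right ha measureReal_le_one).trans hat
  · have ha_pos : 0 < a := ht.trans_lt hta
    have hset :
        {u : I | a * u ≤ t} = Set.Iic ⟨t / a, by positivity, (div_le_one ha_pos).2 hta.le⟩ := by
      ext u
      simp [← Subtype.coe_le_coe, le_div_iff₀ ha_pos, mul_comm]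
    rw [hset, measureReal_def, unitInterval.volume_Iic, ENNReal.toReal_ofReal (by positivity)]
    exact (mul_div_cancel₀ t ha_pos.ne').le

lemma lintegral_ofReal_mul_unitInterval {a : ℝ} (ha : 0 ≤ a) :
    ∫⁻ u : I, ENNReal.ofReal (a * u) = ENNReal.ofReal (a / 2) := by
  have hint : Integrable fun u : I => a * (u : ℝ) :=
    Continuous.integrable_of_hasCompactSupport (by fun_prop) (.of_compactSpace _)
  rw [← ofReal_integral_eq_lintegral_ofReal hint (.of_forall fun u => mul_nonneg ha u.2.1),
    integral_subtype measurableSet_Icc fun u => a * u, integral_Icc_eq_integral_Ioc,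
    ← intervalIntegral.integral_of_le zero_le_one, intervalIntegral.integral_const_mul, integral_id]
  congr 1
  ring

end UniformUnitInterval

section UniformRay

/-- The law of `u • w` for `u` uniform on `[0, 1]`: all contests are played with one common
random factor. -/
def uniformRay {ι : Type*} (w : ι → ℝ) : Measure (ι → ℝ) :=
  (volume : Measure I).map fun u : I => (u : ℝ) • w

variable {ι : Type*} {w : ι → ℝ}

lemma measurable_coe_smul (w : ι → ℝ) : Measurable fun u : I => (u : ℝ) • w := by
  fun_prop

instance : IsProbabilityMeasure (uniformRay w) :=
  Measure.isProbabilityMeasure_map (measurable_coe_smul w).aemeasurable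

lemma mul_uniformRay_real_setOf_le_le {c : ι} (hw : 0 ≤ w c) {t : ℝ} (ht : 0 ≤ t) :
    w c * (uniformRay w).real {y | y c ≤ t} ≤ t := by
  have hmeas : MeasurableSet {y : ι → ℝ | y c ≤ t} := measurableSet_le (by fun_prop) (by fun_prop)
  rw [uniformRay, map_measureReal_apply (measurable_coe_smul w) hmeas]
  simpa [Set.preimage, mul_comm] using mul_volume_real_setOf_mul_le_le hw ht

lemma ae_nonneg_uniformRay [Countable ι] (hw : 0 ≤ w) : ∀ᵐ x ∂uniformRay w, 0 ≤ x :=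
  (ae_map_iff (measurable_coe_smul w).aemeasurable measurableSet_Ici).2
    (.of_forall fun u => smul_nonneg u.2.1 hw)

lemma lintegral_sum_uniformRay [Fintype ι] (hw : 0 ≤ w) :
    ∫⁻ x, ENNReal.ofReal (∑ c, x c) ∂uniformRay w = ENNReal.ofReal ((∑ c, w c) / 2) := by
  rw [uniformRay, lintegral_map (by fun_prop) (measurable_coe_smul w),
    ← lintegral_ofReal_mul_unitInterval (sum_nonneg fun c _ => hw c)]
  simp only [Pi.smul_apply, smul_eq_mul, ← mul_sum, mul_comm]

end UniformRay

section LottoStrategy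

/-- The optimal General Lotto strategies: with probability `p` allocate `2 * m * u * v c` to every
contest `c`, where `u` is uniform on `[0, 1]`, and with probability `1 - p` allocate nothing.
If the values `v` sum to `1`, the expected total allocation is `p * m`. -/
def lottoStrategy {ι : Type*} (v : ι → ℝ) (p : I) (m : ℝ) : Measure (ι → ℝ) :=
  toNNReal p • uniformRay ((2 * m) • v) + toNNReal (σ p) • Measure.dirac 0

instance {ι : Type*} (v : ι → ℝ) (p : I) (m : ℝ) : IsProbabilityMeasure (lottoStrategy v p m) :=
  inferInstanceAs (IsProbabilityMeasure (_ + _))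

lemma mul_lottoStrategy_real_setOf_le_le {ι : Type*} {v : ι → ℝ} {c : ι} (hv : 0 ≤ v c) (p : I)
    {m : ℝ} (hm : 0 < m) {t : ℝ} (ht : 0 ≤ t) :
    v c * (lottoStrategy v p m).real {y | y c ≤ t} ≤ (1 - p) * v c + p / (2 * m) * t := by
  have hmix : (lottoStrategy v p m).real {y | y c ≤ t} =
      p * (uniformRay ((2 * m) • v)).real {y | y c ≤ t} + (1 - p) := by
    rw [lottoStrategy, measureReal_add_apply, measureReal_nnreal_smul_apply,
      measureReal_nnreal_smul_apply]
    simp [measureReal_def, ht]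
  have hray : 2 * m * v c * (uniformRay ((2 * m) • v)).real {y | y c ≤ t} ≤ t :=
    mul_uniformRay_real_setOf_le_le (w := (2 * m) • v) (mul_nonneg (by positivity) hv) ht
  have hp : 0 ≤ (p : ℝ) := p.2.1
  calc v c * (lottoStrategy v p m).real {y | y c ≤ t}
      = (1 - p) * v c +
          p / (2 * m) * (2 * m * v c * (uniformRay ((2 * m) • v)).real {y | y c ≤ t}) := by
        rw [hmix]
        field_simp
        ring
    _ ≤ (1 - p) * v c + p / (2 * m) * t := by gcongr

lemma ae_nonneg_lottoStrategy {ι : Type*} [Countable ι] {v : ι → ℝ} (hv : 0 ≤ v) (p : I) {m : ℝ}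
    (hm : 0 ≤ m) : ∀ᵐ x ∂lottoStrategy v p m, 0 ≤ x := by
  have hray := ae_nonneg_uniformRay (smul_nonneg (mul_nonneg zero_le_two hm) hv)
  have hzero : ∀ᵐ x ∂Measure.dirac (0 : ι → ℝ), 0 ≤ x :=
    (ae_dirac_iff measurableSet_Ici).2 le_rfl
  exact ae_add_measure_iff.2 ⟨Measure.ae_smul_measure hray _, Measure.ae_smul_measure hzero _⟩

lemma lintegral_sum_lottoStrategy {ι : Type*} [Fintype ι] {v : ι → ℝ} (hv : 0 ≤ v) (p : I) {m : ℝ}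
    (hm : 0 ≤ m) :
    ∫⁻ x, ENNReal.ofReal (∑ c, x c) ∂lottoStrategy v p m =
      ENNReal.ofReal (p * m * ∑ c, v c) := by
  have hray : ∫⁻ x, ENNReal.ofReal (∑ c, x c) ∂uniformRay ((2 * m) • v) =
      ENNReal.ofReal (m * ∑ c, v c) := by
    rw [lintegral_sum_uniformRay (smul_nonneg (mul_nonneg zero_le_two hm) hv)]
    simp only [Pi.smul_apply, smul_eq_mul, ← mul_sum]
    congr 1
    ring
  have hzero : ∫⁻ x, ENNReal.ofReal (∑ c, x c) ∂Measure.dirac (0 : ι → ℝ) = 0 := by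
    rw [lintegral_dirac' _ (by fun_prop)]
    simp
  have hp : ENNReal.ofReal p = toNNReal p := ENNReal.ofReal_eq_coe_nnreal p.2.1
  rw [lottoStrategy, lintegral_add_measure, lintegral_smul_measure, lintegral_smul_measure, hray,
    hzero, smul_zero, add_zero, mul_assoc, ENNReal.ofReal_mul p.2.1, hp]
  rfl

variable {C : ℕ} {v : Fin C → ℝ}

lemma lottoStrategy_mem_strat (hv : 0 ≤ v) (p : I) {m : ℝ} (hm : 0 ≤ m) :
    lottoStrategy v p m ∈ Strat C (p * m * ∑ c, v c) :=
  ⟨inferInstance, (mem_ae_iff_prob_eq_one measurableSet_Ici).1 (ae_nonneg_lottoStrategy hv p hm),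
    (lintegral_sum_lottoStrategy hv p hm).le⟩

variable {B m : ℝ} {F : Measure (Fin C → ℝ)}

lemma payoff_lottoStrategy_right_le (hv : 0 ≤ v) (p : I) (hm : 0 < m) (hB : 0 ≤ B)
    (hF : F ∈ Strat C B) :
    payoff C v F (lottoStrategy v p m) ≤ (1 - p) * ∑ c, v c + p / (2 * m) * B := by
  have hp : 0 ≤ (p : ℝ) := p.2.1
  rw [mul_sum]
  exact Strat.payoff_le_of_cdf_le (by positivity) hB hF _
    fun c t ht => mul_lottoStrategy_real_setOf_le_le (hv c) p hm ht

lemma le_payoff_lottoStrategy_left (hv : 0 ≤ v) (p : I) (hm : 0 < m) (hB : 0 ≤ B)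
    {G : Measure (Fin C → ℝ)} (hG : G ∈ Strat C B) :
    p * ∑ c, v c - p / (2 * m) * B ≤ payoff C v (lottoStrategy v p m) G := by
  have := hG.1
  have hsum := sum_le_payoff_add_payoff (lottoStrategy v p m) G hv
  have hupper := payoff_lottoStrategy_right_le hv p hm hB hG
  linarith

lemma exists_strat_payoff_bounds (hv : 0 ≤ v) (hsum : ∑ c, v c = 1) (hB : 0 ≤ B) (hm : 0 < m)
    (hBm : B ≤ m) : ∃ S ∈ Strat C B, ∀ B', 0 ≤ B' → ∀ H ∈ Strat C B',
      B / m * (1 - B' / (2 * m)) ≤ payoff C v S H ∧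
      payoff C v H S ≤ 1 - B / m * (1 - B' / (2 * m)) := by
  let p : I := ⟨B / m, by positivity, (div_le_one hm).2 hBm⟩
  have hbudget : p * m * ∑ c, v c = B := by rw [hsum, mul_one, div_mul_cancel₀ B hm.ne']
  refine ⟨lottoStrategy v p m, hbudget ▸ lottoStrategy_mem_strat hv p hm.le,
    fun B' hB' H hH => ⟨?_, ?_⟩⟩
  · refine Eq.trans_le ?_ (le_payoff_lottoStrategy_left hv p hm hB' hH)
    rw [hsum]
    ring
  · refine (payoff_lottoStrategy_right_le hv p hm hB' hH).trans_eq ?_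
    rw [hsum]
    ring

end LottoStrategy

section Value

variable {X Y : ℝ}

lemma div_max_mul_one_sub_div_max (hX : 0 < X) (hY : 0 < Y) :
    X / max X Y * (1 - Y / (2 * max X Y)) =
      if X ≤ Y then X / (2 * Y) else 1 - Y / (2 * X) := by
  split_ifs with h
  · rw [max_eq_right h]
    field_simp
    ring
  · rw [max_eq_left (not_le.1 h).le]
    field_simp

lemma one_sub_div_max_mul_one_sub_div_max (hX : 0 < X) (hY : 0 < Y) :
    1 - Y / max X Y * (1 - X / (2 * max X Y)) =
      if X ≤ Y then X / (2 * Y) else 1 - Y / (2 * X) := by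
  rw [← div_max_mul_one_sub_div_max hX hY]
  have hfactor : (1 - X / max X Y) * (1 - Y / max X Y) = 0 := by
    rcases le_total X Y with h | h <;> simp [h, hX.ne', hY.ne']
  linear_combination hfactor

end Value

/-- Theorem 1, classic General Lotto: the max-min and min-max values of the
game `GL(X,Y;v)` coincide and equal `π_GL(X,Y) = X/(2Y)` if `X ≤ Y`, `1 - Y/(2X)` if `X > Y`. -/
theorem GL_equilibrium_value (C : ℕ) (hC : 0 < C) (v : Fin C → ℝ)
    (hpos : ∀ c, 0 < v c) (hsum : ∑ c, v c = 1)
    (X Y : ℝ) (hX : 0 < X) (hY : 0 < Y) :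
    (⨆ F : Strat C X, ⨅ G : Strat C Y, payoff C v F.1 G.1) =
        (if X ≤ Y then X / (2 * Y) else 1 - Y / (2 * X)) ∧
    (⨅ G : Strat C Y, ⨆ F : Strat C X, payoff C v F.1 G.1) =
        (if X ≤ Y then X / (2 * Y) else 1 - Y / (2 * X)) := by
  have hv : 0 ≤ v := fun c => (hpos c).le
  have hm : 0 < max X Y := lt_max_of_lt_left hX
  obtain ⟨F₀, hF₀, hboundF₀⟩ := exists_strat_payoff_bounds hv hsum hX.le hm (le_max_left X Y)
  obtain ⟨G₀, hG₀, hboundG₀⟩ := exists_strat_payoff_bounds hv hsum hY.le hm (le_max_right X Y)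
  have hlower (G : Strat C Y) := (hboundF₀ Y hY.le G.1 G.2).1
  have hupper (F : Strat C X) := (hboundG₀ X hX.le F.1 F.2).2
  rw [div_max_mul_one_sub_div_max hX hY] at hlower
  rw [one_sub_div_max_mul_one_sub_div_max hX hY] at hupper
  refine ⟨ciSup_ciInf_eq_of_saddlePoint (a₀ := ⟨F₀, hF₀⟩) (b₀ := ⟨G₀, hG₀⟩) (fun F => ?_)
      hlower hupper,
    ciInf_ciSup_eq_of_saddlePoint (a₀ := ⟨F₀, hF₀⟩) (b₀ := ⟨G₀, hG₀⟩) (fun G => ?_)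
      hlower hupper⟩
  · exact ⟨0, Set.forall_mem_range.2 fun G => payoff_nonneg hv F.1 G.1⟩
  · refine ⟨∑ c, v c, Set.forall_mem_range.2 fun F => ?_⟩
    have := F.2.1
    have := G.2.1
    exact payoff_le_sum F.1 G.1 hv
end
end

section
/- For any k ∈ {1,…,C} and any subset S ⊆ {1,…,C} with |S| = k, the effective value of the top-k set dominates: (∏_{j∈[k]} v_j)/(Σ_{ℓ∈[k]} ∏_{j∈[k]∖{ℓ}} v_j) ≥ (∏_{j∈S} v_j)/(Σ_{ℓ∈S} ∏_{j∈S∖{ℓ}} v_j). -/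
open Finset

noncomputable section

/-- The top `k` contests in value, `[k] = {1,…,k}`. -/
def topk (C k : ℕ) : Finset (Fin C) := Finset.univ.filter (fun c => (c : ℕ) < k)

theorem isLowerSet_topk (C k : ℕ) : IsLowerSet (topk C k : Set (Fin C)) := by
  intro a b hba ha
  simp only [topk, mem_coe, mem_filter_univ] at ha ⊢
  exact lt_of_le_of_lt hba ha

theorem card_topk {C k : ℕ} (hk : k ≤ C) : #(topk C k) = k := by
  rw [topk, Fin.card_filter_val_lt, min_eq_right hk]

section SumComparison

variable {ι M : Type*} [AddCommMonoid M] [PartialOrder M] {s t : Finset ι} {f : ι → M}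

theorem sum_le_sum_of_card_eq_of_forall_le [IsOrderedAddMonoid M] (hst : #s = #t)
    (hf : ∀ i ∈ s, ∀ j ∈ t, f i ≤ f j) : ∑ i ∈ s, f i ≤ ∑ j ∈ t, f j := by
  let e : s ≃ t := s.equivOfCardEq hst
  calc ∑ i ∈ s, f i = ∑ i : s, f i := (sum_coe_sort s f).symm
    _ ≤ ∑ i : s, f (e i) := sum_le_sum fun i _ => hf i i.2 (e i) (e i).2
    _ = ∑ j : t, f j := e.sum_comp fun j : t => f j
    _ = ∑ j ∈ t, f j := sum_coe_sort t f

theorem sum_le_sum_of_isLowerSet_of_card_eq [LinearOrder ι] [IsOrderedCancelAddMonoid M]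
    (hs : IsLowerSet (s : Set ι)) (hst : #s = #t) (hf : Monotone f) :
    ∑ i ∈ s, f i ≤ ∑ i ∈ t, f i := by
  rw [← sum_sdiff_le_sum_sdiff]
  refine sum_le_sum_of_card_eq_of_forall_le (card_sdiff_comm hst) fun i hi j hj => hf ?_
  have hi_mem : i ∈ s := (mem_sdiff.1 hi).1
  have hj_notMem : j ∉ s := (mem_sdiff.1 hj).2
  exact le_of_not_ge fun hji => hj_notMem (hs hji hi_mem)

end SumComparison

section EffectiveValue

variable {ι K : Type*} [Field K]

/-- The effective value of a set `S` of contests with values `v`, in the paper's form. For nonzero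
values it is the reciprocal of the sum of their reciprocals, so comparing effective values amounts
to comparing sums of `(v l)⁻¹`. On `∅` it takes the junk value `1 / 0 = 0`. -/
def effectiveValue [DecidableEq ι] (v : ι → K) (S : Finset ι) : K :=
  (∏ j ∈ S, v j) / ∑ l ∈ S, ∏ j ∈ S.erase l, v j

theorem sum_prod_erase_eq_prod_mul_sum_inv [DecidableEq ι] {v : ι → K} {S : Finset ι}
    (hv : ∀ i ∈ S, v i ≠ 0) :
    ∑ l ∈ S, ∏ j ∈ S.erase l, v j = (∏ j ∈ S, v j) * ∑ l ∈ S, (v l)⁻¹ := by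
  rw [mul_sum]
  refine sum_congr rfl fun l hl => ?_
  rw [← prod_erase_mul S v hl, mul_inv_cancel_right₀ (hv l hl)]

theorem effectiveValue_eq_inv_sum_inv [DecidableEq ι] {v : ι → K} {S : Finset ι}
    (hv : ∀ i ∈ S, v i ≠ 0) : effectiveValue v S = (∑ l ∈ S, (v l)⁻¹)⁻¹ := by
  rw [effectiveValue, sum_prod_erase_eq_prod_mul_sum_inv hv,
    div_mul_cancel_left₀ (prod_ne_zero_iff.2 hv)]

theorem topk_effective_value_dominates_general [LinearOrder ι] [LinearOrder K]
    [IsStrictOrderedRing K] {v : ι → K} (hpos : ∀ i, 0 < v i) (hv : Antitone v) {S T : Finset ι}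
    (hT : IsLowerSet (T : Set ι)) (hT_nonempty : T.Nonempty) (hcard : #T = #S) :
    effectiveValue v S ≤ effectiveValue v T := by
  have hv_inv : Monotone fun i => (v i)⁻¹ := fun _ j hij => inv_anti₀ (hpos j) (hv hij)
  have hT_sum_pos : 0 < ∑ l ∈ T, (v l)⁻¹ := sum_pos (fun i _ => inv_pos.2 (hpos i)) hT_nonempty
  rw [effectiveValue_eq_inv_sum_inv fun i _ => (hpos i).ne',
    effectiveValue_eq_inv_sum_inv fun i _ => (hpos i).ne']
  exact inv_anti₀ hT_sum_pos (sum_le_sum_of_isLowerSet_of_card_eq hT hcard hv_inv)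

end EffectiveValue

/-- for any size-`k` subset `S`, the effective value of the top-`k` set
dominates that of `S`. -/
theorem topk_effective_value_dominates (C : ℕ) (v : Fin C → ℝ)
    (hpos : ∀ c, 0 < v c) (hdec : StrictAnti v) (hsum : ∑ c, v c = 1)
    (k : ℕ) (hk1 : 1 ≤ k) (hk2 : k ≤ C) (S : Finset (Fin C)) (hcard : S.card = k) :
    (∏ j ∈ S, v j) / (∑ l ∈ S, ∏ j ∈ S.erase l, v j) ≤
      (∏ j ∈ topk C k, v j) / (∑ l ∈ topk C k, ∏ j ∈ (topk C k).erase l, v j) := by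
  have hk : #(topk C k) = k := card_topk hk2
  exact topk_effective_value_dominates_general hpos hdec.antitone (isLowerSet_topk C k)
    (card_pos.1 (hk.symm ▸ hk1)) (hk.trans hcard.symm)
end
end
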